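/- For any poset P, let Γ P denote P with the Alexandroff topology (opens are the upper sets) and let Id P be the set of ideals of P (directed lower sets), ordered by inclusion. Then the map φ : Γ P → Σ(Id P), φ(x) = ↓x, is continuous, the Scott space Σ(Id P) is sober, and for every continuous map f from Γ P to a d-space Y there is a unique continuous map f* : Σ(Id P) → Y with f* ∘ φ = f. In particular, ⟨Σ(Id P), φ⟩ is simultaneously the d-reflection, the well-filtered reflection, and the sobrification of Γ P. -/

import Mathlib

universe u v

open Set

/-- The specialization order on a topological space: `specLE x y` iff `x ∈ closure {y}`. -/
def specLE {X : Type*} [TopologicalSpace X] (x y : X) : Prop :=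
  x ∈ closure ({y} : Set X)

/-- `a` is an upper bound of `D` with respect to the specialization order. -/
def specUB {X : Type*} [TopologicalSpace X] (D : Set X) (a : X) : Prop :=
  ∀ d ∈ D, specLE d a

/-- `a` is a least upper bound of `D` with respect to the specialization order. -/
def specLUB {X : Type*} [TopologicalSpace X] (D : Set X) (a : X) : Prop :=
  specUB D a ∧ ∀ b, specUB D b → specLE a b

/-- `U` is Scott open with respect to the specialization order. -/
def ScottOpenSpec {X : Type*} [TopologicalSpace X] (U : Set X) : Prop :=
  (∀ x y, specLE x y → x ∈ U → y ∈ U) ∧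
  ∀ D : Set X, D.Nonempty → DirectedOn specLE D → ∀ a, specLUB D a → a ∈ U →
    (D ∩ U).Nonempty

/-- A d-space (monotone convergence space): a T0 space which is a dcpo in its
specialization order and in which every open set is Scott open with respect to
the specialization order. -/
def DSpace (X : Type*) [TopologicalSpace X] : Prop :=
  T0Space X ∧
  (∀ D : Set X, D.Nonempty → DirectedOn specLE D → ∃ a, specLUB D a) ∧
  (∀ U : Set X, IsOpen U → ScottOpenSpec U)

/-- A set is saturated if it is an intersection of open sets. -/
def Saturated {X : Type*} [TopologicalSpace X] (A : Set X) : Prop :=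
  ∃ 𝒰 : Set (Set X), (∀ U ∈ 𝒰, IsOpen U) ∧ A = ⋂₀ 𝒰

/-- A T0 space is well-filtered if every filtered (under reverse inclusion) family of
nonempty compact saturated sets whose intersection is contained in an open set `U`
has a member contained in `U`. -/
def WellFiltered (X : Type*) [TopologicalSpace X] : Prop :=
  T0Space X ∧
  ∀ 𝒦 : Set (Set X), 𝒦.Nonempty →
    (∀ K ∈ 𝒦, K.Nonempty ∧ IsCompact K ∧ Saturated K) →
    DirectedOn (fun A B => B ⊆ A) 𝒦 →
    ∀ U : Set X, IsOpen U → ⋂₀ 𝒦 ⊆ U → ∃ K ∈ 𝒦, K ⊆ U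

/-- A nonempty closed set which is irreducible. -/
def IrredClosed {X : Type*} [TopologicalSpace X] (A : Set X) : Prop :=
  A.Nonempty ∧ IsClosed A ∧
  ∀ F₁ F₂ : Set X, IsClosed F₁ → IsClosed F₂ → A ⊆ F₁ ∪ F₂ → (A ⊆ F₁ ∨ A ⊆ F₂)

/-- A space is sober if every irreducible closed set is the closure of a unique point. -/
def Sober (X : Type*) [TopologicalSpace X] : Prop :=
  ∀ A : Set X, IrredClosed A → ∃! x : X, A = closure ({x} : Set X)

/-- The specialization preorder on a topological space. -/
def specPreorder (Y : Type*) [TopologicalSpace Y] : Preorder Y where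
  le := specLE
  le_refl x := subset_closure rfl
  le_trans x y z hxy hyz :=
    closure_minimal (Set.singleton_subset_iff.mpr hyz) isClosed_closure hxy

/-- A Scott open subset of a poset: an upper set inaccessible by suprema of directed sets. -/
def IsScottOpen {P : Type*} [Preorder P] (U : Set P) : Prop :=
  IsUpperSet U ∧
  ∀ D : Set P, D.Nonempty → DirectedOn (· ≤ ·) D → ∀ a, IsLUB D a → a ∈ U →
    (D ∩ U).Nonempty

/-- The Scott topology on a poset. `Σ P` is `P` equipped with `scottTop P`. -/
def scottTop (P : Type*) [Preorder P] : TopologicalSpace P where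
  IsOpen := IsScottOpen
  isOpen_univ := by
    refine ⟨isUpperSet_univ, fun D hD _ _ _ _ => ?_⟩
    obtain ⟨d, hd⟩ := hD
    exact ⟨d, hd, trivial⟩
  isOpen_inter := by
    rintro U V ⟨hU1, hU2⟩ ⟨hV1, hV2⟩
    refine ⟨hU1.inter hV1, ?_⟩
    rintro D hne hdir a ha ⟨haU, haV⟩
    obtain ⟨d1, hd1D, hd1U⟩ := hU2 D hne hdir a ha haU
    obtain ⟨d2, hd2D, hd2V⟩ := hV2 D hne hdir a ha haV
    obtain ⟨d3, hd3D, h13, h23⟩ := hdir d1 hd1D d2 hd2D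
    exact ⟨d3, hd3D, hU1 h13 hd1U, hV1 h23 hd2V⟩
  isOpen_sUnion := by
    intro S hS
    refine ⟨isUpperSet_sUnion fun s hs => (hS s hs).1, ?_⟩
    rintro D hne hdir a ha ⟨U, hUS, haU⟩
    obtain ⟨d, hdD, hdU⟩ := (hS U hUS).2 D hne hdir a ha haU
    exact ⟨d, hdD, U, hUS, hdU⟩

/-- A dcpo: every nonempty directed subset has a least upper bound. -/
def IsDcpo (P : Type*) [Preorder P] : Prop :=
  ∀ D : Set P, D.Nonempty → DirectedOn (· ≤ ·) D → ∃ a, IsLUB D a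

/-- The way-below relation. -/
def wayBelow {P : Type*} [Preorder P] (x y : P) : Prop :=
  ∀ D : Set P, D.Nonempty → DirectedOn (· ≤ ·) D → ∀ a, IsLUB D a → y ≤ a →
    ∃ d ∈ D, x ≤ d

/-- A poset is Noetherian if every (nonempty) directed subset has a greatest member. -/
def Noetherian (P : Type*) [Preorder P] : Prop :=
  ∀ D : Set P, D.Nonempty → DirectedOn (· ≤ ·) D → ∃ m ∈ D, ∀ d ∈ D, d ≤ m

/-- An ideal: a (nonempty) directed lower set. -/
def IsIdealSet {P : Type*} [Preorder P] (I : Set P) : Prop :=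
  I.Nonempty ∧ DirectedOn (· ≤ ·) I ∧ IsLowerSet I

/-- The Alexandroff topology on a poset: the open sets are the upper sets. -/
def alexTop (P : Type*) [Preorder P] : TopologicalSpace P where
  IsOpen := IsUpperSet
  isOpen_univ := isUpperSet_univ
  isOpen_inter _ _ := IsUpperSet.inter
  isOpen_sUnion _ h := isUpperSet_sUnion h

/-- The space `X_⊤` obtained from `X` by adjoining a new top point `⊤` (here `none`):
the closed sets are the closed sets of `X` together with the whole space. -/
def topTop (X : Type*) [TopologicalSpace X] : TopologicalSpace (Option X) where
  IsOpen V := V = ∅ ∨ ∃ U : Set X, IsOpen U ∧ V = insert none (some '' U)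
  isOpen_univ := by
    refine Or.inr ⟨Set.univ, isOpen_univ, ?_⟩
    ext (_ | a) <;> simp
  isOpen_inter := by
    rintro V W (rfl | ⟨U₁, hU₁, rfl⟩) hW
    · exact Or.inl (by simp)
    rcases hW with rfl | ⟨U₂, hU₂, rfl⟩
    · exact Or.inl (by simp)
    · refine Or.inr ⟨U₁ ∩ U₂, hU₁.inter hU₂, ?_⟩
      ext (_ | a) <;> simp
  isOpen_sUnion := by
    classical
    intro S hS
    by_cases h0 : ⋃₀ S = ∅
    · exact Or.inl h0
    · refine Or.inr ⟨{x : X | some x ∈ ⋃₀ S}, ?_, ?_⟩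
      · have h1 : {x : X | some x ∈ ⋃₀ S} = ⋃ V ∈ S, some ⁻¹' V := by
          ext x; simp [Set.mem_sUnion]
        rw [h1]
        refine isOpen_biUnion fun V hV => ?_
        rcases hS V hV with rfl | ⟨U, hU, rfl⟩
        · rw [Set.preimage_empty]; exact isOpen_empty
        · have h2 : (some ⁻¹' (insert none (some '' U)) : Set X) = U := by
            ext x; simp
          rw [h2]; exact hU
      · have hnone : (none : Option X) ∈ ⋃₀ S := by
          obtain ⟨v, V, hVS, hvV⟩ := Set.nonempty_iff_ne_empty.mpr h0
          rcases hS V hVS with rfl | ⟨U, hU, rfl⟩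
          · exact absurd hvV (by simp)
          · exact ⟨_, hVS, by simp⟩
        ext (_ | a)
        · simp only [Set.mem_insert_iff, true_or, iff_true]
          exact hnone
        · simp [Set.mem_sUnion]

/-- A `𝐊`-set of a space `X` (relative to a class `K` of spaces): a set whose image
under any continuous map to a `𝐊`-space has the closure of a unique point as closure. -/
def IsKSet (K : (Y : Type u) → TopologicalSpace Y → Prop)
    (X : Type u) [tX : TopologicalSpace X] (A : Set X) : Prop :=
  ∀ (Y : Type u) (tY : TopologicalSpace Y), K Y tY →
    ∀ f : X → Y, @Continuous X Y tX tY f →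
      ∃! y : Y, @closure Y tY (f '' A) = @closure Y tY {y}

/-- `𝐊(X)`: the collection of closed `𝐊`-sets of `X`. -/
def KSets (K : (Y : Type u) → TopologicalSpace Y → Prop)
    (X : Type u) [TopologicalSpace X] : Set (Set X) :=
  {A : Set X | IsClosed A ∧ IsKSet K X A}

/-- The lower Vietoris topology on a family `G` of subsets of `X`, generated by the
sets `◊U = {A ∈ G | A ∩ U ≠ ∅}` for `U` open. -/
def lowerVietoris {X : Type*} [TopologicalSpace X] (G : Set (Set X)) :
    TopologicalSpace ↥G :=
  TopologicalSpace.generateFrom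
    {S : Set ↥G | ∃ U : Set X, IsOpen U ∧ S = {A : ↥G | ((A : Set X) ∩ U).Nonempty}}

/-- A class `K` of spaces is adequate if `P_H(𝐊(X))` is a `𝐊`-space for every T0 space `X`. -/
def Adequate (K : (Y : Type u) → TopologicalSpace Y → Prop) : Prop :=
  ∀ (X : Type u) (tX : TopologicalSpace X), @T0Space X tX →
    K ↥(@KSets K X tX) (@lowerVietoris X tX (@KSets K X tX))

/-- `⟨Z, η⟩` is a `𝐊`-reflection of `X`. -/
def IsKReflection (K : (Y : Type u) → TopologicalSpace Y → Prop)
    (X : Type u) (tX : TopologicalSpace X)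
    (Z : Type u) (tZ : TopologicalSpace Z) (η : X → Z) : Prop :=
  K Z tZ ∧ @Continuous X Z tX tZ η ∧
  ∀ (Y : Type u) (tY : TopologicalSpace Y), K Y tY →
    ∀ f : X → Y, @Continuous X Y tX tY f →
      ∃! g : Z → Y, @Continuous Z Y tZ tY g ∧ g ∘ η = f

/-- The carrier of the Johnstone poset `𝕁 = ℕ × (ℕ ∪ {ω})`. -/
structure Johnstone where
  fst : ℕ
  snd : WithTop ℕ

/-- The Johnstone order: `(j, k) ≤ (m, n)` iff `j = m` and `k ≤ n`, or `n = ω` and `k ≤ m`. -/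
instance : PartialOrder Johnstone where
  le p q := (p.fst = q.fst ∧ p.snd ≤ q.snd) ∨ (q.snd = ⊤ ∧ p.snd ≤ (q.fst : WithTop ℕ))
  le_refl p := Or.inl ⟨rfl, le_rfl⟩
  le_trans p q r hpq hqr := by
    rcases hpq with ⟨h1, h2⟩ | ⟨h1, h2⟩ <;> rcases hqr with ⟨h3, h4⟩ | ⟨h3, h4⟩
    · exact Or.inl ⟨h1.trans h3, h2.trans h4⟩
    · exact Or.inr ⟨h3, h2.trans h4⟩
    · have hr : r.snd = ⊤ := top_le_iff.mp (h1 ▸ h4)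
      exact Or.inr ⟨hr, h3 ▸ h2⟩
    · rw [h1] at h4
      exact absurd h4 (by simp)
  le_antisymm p q hpq hqp := by
    obtain ⟨pf, ps⟩ := p
    obtain ⟨qf, qs⟩ := q
    rcases hpq with ⟨h1, h2⟩ | ⟨h1, h2⟩ <;> rcases hqp with ⟨h3, h4⟩ | ⟨h3, h4⟩
    · dsimp at *
      cases h1
      cases le_antisymm h2 h4
      rfl
    · dsimp at *
      rw [h3] at h2
      rw [top_le_iff.mp h2] at h4
      exact absurd h4 (by simp)
    · dsimp at *
      rw [h1] at h4
      rw [top_le_iff.mp h4] at h2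
      exact absurd h2 (by simp)
    · dsimp at *
      rw [h3] at h2
      exact absurd h2 (by simp)

/-- The class of d-spaces. -/
def dClass : (Y : Type u) → TopologicalSpace Y → Prop := fun Y tY => @DSpace Y tY

/-- The class of well-filtered spaces. -/
def wfClass : (Y : Type u) → TopologicalSpace Y → Prop := fun Y tY => @WellFiltered Y tY

/-- The class of sober spaces. -/
def soberClass : (Y : Type u) → TopologicalSpace Y → Prop := fun Y tY => @Sober Y tY

/-!
Every ideal `I` is the directed supremum of the principal ideals `↓x`, `x ∈ I`, and each `↓x` is a
compact element of `Id P`. So a Scott closed set `A` contains `I` exactly when it contains `↓x` for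
all `x ∈ I`. If `A` is irreducible, then `{x | ↓x ∈ A}` is itself an ideal, and it is the generic
point of `A`. Likewise a continuous map `g` on `Σ (Id P)` is forced to send `I` to the supremum of
the `g (↓x)`, `x ∈ I`, and in a d-space these suprema exist and define a continuous map.

Since sober spaces are well-filtered (topological Rudin lemma) and well-filtered spaces are
d-spaces, the d-reflection, being sober, is also the reflection into the two smaller classes.
-/

open scoped Topology

section Specialization

variable {X : Type*} [TopologicalSpace X] {x y : X} {D K : Set X}

theorem specLE_iff_specializes : specLE x y ↔ y ⤳ x :=
  specializes_iff_mem_closure.symm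

theorem specLE_iff_forall_isOpen : specLE x y ↔ ∀ U : Set X, IsOpen U → x ∈ U → y ∈ U :=
  specLE_iff_specializes.trans specializes_iff_forall_open

theorem specLE_trans {z : X} (hxy : specLE x y) (hyz : specLE y z) : specLE x z :=
  (specPreorder X).le_trans x y z hxy hyz

theorem specLUB.unique [T0Space X] (hx : specLUB D x) (hy : specLUB D y) : x = y :=
  ((specLE_iff_specializes.1 (hy.2 x hx.1)).antisymm
    (specLE_iff_specializes.1 (hx.2 y hy.1))).eq

theorem specLUB_of_mem_closure (hx : x ∈ closure D) (hD : specUB D x) : specLUB D x :=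
  ⟨hD, fun _ hb => closure_minimal hb isClosed_closure hx⟩

theorem saturated_nhdsKer (s : Set X) : Saturated (nhdsKer s) :=
  ⟨_, fun _ hU => hU.1, nhdsKer_def s⟩

theorem Saturated.mem_of_specLE (hK : Saturated K) (hxy : specLE x y) (hx : x ∈ K) : y ∈ K := by
  obtain ⟨𝒰, h𝒰, rfl⟩ := hK
  exact fun U hU => specLE_iff_forall_isOpen.1 hxy U (h𝒰 U hU) (hx U hU)

theorem irredClosed_iff : IrredClosed D ↔ IsIrreducible D ∧ IsClosed D := by
  rw [IrredClosed, IsIrreducible, isPreirreducible_iff_isClosed_union_isClosed, and_assoc,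
    and_comm (a := IsClosed D)]

theorem sober_iff : Sober X ↔ T0Space X ∧ QuasiSober X := by
  constructor
  · intro h
    refine ⟨⟨fun x y hxy => ?_⟩, ⟨fun hS hS' => ?_⟩⟩
    · exact (h _ (irredClosed_iff.2 ⟨isIrreducible_singleton.closure, isClosed_closure⟩)).unique
        rfl (inseparable_iff_closure_eq.1 hxy)
    · obtain ⟨x, hx, -⟩ := h _ (irredClosed_iff.2 ⟨hS, hS'⟩)
      exact ⟨x, hx.symm⟩
  · rintro ⟨_, _⟩ A hA
    obtain ⟨hirr, hcl⟩ := irredClosed_iff.1 hA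
    obtain ⟨x, hx⟩ := QuasiSober.sober hirr hcl
    exact ⟨x, hx.symm, fun y hy => IsGenericPoint.eq hy.symm hx⟩

end Specialization

section SoberToDSpace

variable {X : Type*} [TopologicalSpace X] {𝒦 : Set (Set X)} {A C D : Set X}

/-- The closed sets meeting every member of a family `𝒦` of sets; the minimal ones are the subject
of the topological Rudin lemma. -/
def IsClosedTransversal (𝒦 : Set (Set X)) (A : Set X) : Prop :=
  IsClosed A ∧ ∀ K ∈ 𝒦, (K ∩ A).Nonempty

theorem IsClosedTransversal.sInter {c : Set (Set X)} (h𝒦 : ∀ K ∈ 𝒦, IsCompact K)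
    (hc : ∀ A ∈ c, IsClosedTransversal 𝒦 A) (hchain : IsChain (· ⊆ ·) c) (hne : c.Nonempty) :
    IsClosedTransversal 𝒦 (⋂₀ c) := by
  refine ⟨isClosed_sInter fun A hA => (hc A hA).1, fun K hK => ?_⟩
  have : Nonempty c := hne.to_subtype
  by_contra hempty
  rw [not_nonempty_iff_eq_empty, sInter_eq_iInter] at hempty
  obtain ⟨A, hA⟩ := (h𝒦 K hK).elim_directed_family_closed _ (fun A : c => (hc A A.2).1) hempty
    (show IsChain (· ⊇ ·) c from hchain.symm).directedOn.directed_val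
  exact ((hc A A.2).2 K hK).ne_empty hA

theorem IsClosedTransversal.exists_minimal_subset (h𝒦 : ∀ K ∈ 𝒦, IsCompact K)
    (hC : IsClosedTransversal 𝒦 C) : ∃ A ⊆ C, Minimal (IsClosedTransversal 𝒦) A :=
  zorn_superset_nonempty {A | IsClosedTransversal 𝒦 A}
    (fun c hc hchain hne =>
      ⟨⋂₀ c, .sInter h𝒦 hc hchain hne, fun _ => sInter_subset_of_mem⟩) C hC

theorem IsClosedTransversal.isIrreducible_of_minimal (hne : 𝒦.Nonempty)
    (hdir : DirectedOn (fun K L => L ⊆ K) 𝒦) (hA : Minimal (IsClosedTransversal 𝒦) A) :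
    IsIrreducible A := by
  obtain ⟨hcl, hmeet⟩ := hA.prop
  have exists_disjoint {F : Set X} (hF : IsClosed F) (hAF : ¬A ⊆ F) :
      ∃ K ∈ 𝒦, ¬(K ∩ (A ∩ F)).Nonempty := by
    by_contra! h
    exact hAF (subset_inter_iff.1 (hA.le_of_le ⟨hcl.inter hF, h⟩ inter_subset_left)).2
  obtain ⟨K₀, hK₀⟩ := hne
  refine ⟨(hmeet K₀ hK₀).right, isPreirreducible_iff_isClosed_union_isClosed.2
    fun F₁ F₂ hF₁ hF₂ hAF => ?_⟩
  by_contra! hnot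
  obtain ⟨K₁, hK₁, hdisj₁⟩ := exists_disjoint hF₁ hnot.1
  obtain ⟨K₂, hK₂, hdisj₂⟩ := exists_disjoint hF₂ hnot.2
  obtain ⟨K, hK, hKK₁, hKK₂⟩ := hdir K₁ hK₁ K₂ hK₂
  obtain ⟨x, hxK, hxA⟩ := hmeet K hK
  rcases hAF hxA with hx | hx
  · exact hdisj₁ ⟨x, hKK₁ hxK, hxA, hx⟩
  · exact hdisj₂ ⟨x, hKK₂ hxK, hxA, hx⟩

theorem Sober.wellFiltered (h : Sober X) : WellFiltered X := by
  obtain ⟨_, _⟩ := sober_iff.1 h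
  refine ⟨inferInstance, fun 𝒦 hne h𝒦 hdir U hU hsub => ?_⟩
  by_contra! hnot
  have hcompl : IsClosedTransversal 𝒦 Uᶜ :=
    ⟨hU.isClosed_compl, fun K hK => inter_compl_nonempty_iff.2 (hnot K hK)⟩
  obtain ⟨A, hAU, hA⟩ := hcompl.exists_minimal_subset fun K hK => (h𝒦 K hK).2.1
  obtain ⟨a, ha⟩ :=
    QuasiSober.sober (IsClosedTransversal.isIrreducible_of_minimal hne hdir hA) hA.prop.1
  refine hAU ha.mem (hsub fun K hK => ?_)
  obtain ⟨y, hyK, hyA⟩ := hA.prop.2 K hK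
  exact (h𝒦 K hK).2.2.mem_of_specLE (specLE_iff_specializes.2 (ha.specializes hyA)) hyK

theorem WellFiltered.exists_specUB_mem_closure (h : WellFiltered X) (hne : D.Nonempty)
    (hdir : DirectedOn specLE D) : ∃ a ∈ closure D, specUB D a := by
  by_contra! hnot
  -- An upper bound of `D` is a point of `⋂ d ∈ D, ↑d`, so this filtered intersection lies in the
  -- complement of `closure D`.
  obtain ⟨_, ⟨d, hd, rfl⟩, hdsub⟩ := h.2 ((fun d => nhdsKer {d}) '' D) (hne.image _)
    (forall_mem_image.2 fun d _ => ⟨⟨d, subset_nhdsKer rfl⟩,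
      isCompact_singleton.nhdsKer, saturated_nhdsKer _⟩)
    (hdir.mono_comp fun _ _ hde =>
      specializes_iff_nhdsKer_subset.1 (specLE_iff_specializes.1 hde))
    (closure D)ᶜ isClosed_closure.isOpen_compl
    (fun a ha haD => hnot a haD fun d hd =>
      specLE_iff_specializes.2 (mem_nhdsKer_singleton.1 (ha _ (mem_image_of_mem _ hd))))
  exact hdsub (subset_nhdsKer rfl) (subset_closure hd)

theorem WellFiltered.dSpace (h : WellFiltered X) : DSpace X := by
  refine ⟨h.1, fun D hne hdir => ?_, fun U hU =>
    ⟨fun x y hxy => specLE_iff_forall_isOpen.1 hxy U hU, fun D hne hdir a ha haU => ?_⟩⟩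
  · obtain ⟨a, haD, ha⟩ := h.exists_specUB_mem_closure hne hdir
    exact ⟨a, specLUB_of_mem_closure haD ha⟩
  · obtain ⟨b, hbD, hb⟩ := h.exists_specUB_mem_closure hne hdir
    have hbU : b ∈ U := specLE_iff_forall_isOpen.1 (ha.2 b hb) U hU haU
    exact (mem_closure_iff.1 hbD U hU hbU).mono (inter_comm U D).subset

end SoberToDSpace

section Reflection

variable {K K' : (Y : Type u) → TopologicalSpace Y → Prop}
  {X : Type u} {tX : TopologicalSpace X} {Z : Type u} {tZ : TopologicalSpace Z} {η : X → Z}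

theorem IsKReflection.of_subclass (h : IsKReflection K X tX Z tZ η)
    (hK : ∀ Y tY, K' Y tY → K Y tY) (hZ : K' Z tZ) : IsKReflection K' X tX Z tZ η :=
  ⟨hZ, h.2.1, fun Y tY hY => h.2.2 Y tY (hK Y tY hY)⟩

end Reflection

section Alexandroff

variable {P Y : Type*} [Preorder P] [tY : TopologicalSpace Y] {f : P → Y}

theorem continuous_alexTop_iff :
    Continuous[alexTop P, tY] f ↔ ∀ ⦃x y⦄, x ≤ y → specLE (f x) (f y) := by
  simp only [specLE_iff_forall_isOpen, @continuous_def _ _ (alexTop P)]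
  exact ⟨fun h x y hxy U hU => h U hU hxy, fun h U hU x y hxy => h hxy U hU⟩

theorem specLUB_image_Iic (hf : Continuous[alexTop P, tY] f) (x : P) :
    specLUB (f '' Iic x) (f x) :=
  ⟨forall_mem_image.2 fun _ hy => continuous_alexTop_iff.1 hf hy,
    fun _ hb => hb _ (mem_image_of_mem f self_mem_Iic)⟩

end Alexandroff

section Scott

variable {Q Y : Type*} [Preorder Q] [TopologicalSpace Y] {g : Q → Y} {A D : Set Q} {x y : Q}

attribute [local instance] scottTop

theorem isClosed_scottTop_iff :
    IsClosed A ↔ IsLowerSet A ∧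
      ∀ D ⊆ A, D.Nonempty → DirectedOn (· ≤ ·) D → ∀ a, IsLUB D a → a ∈ A := by
  rw [← isOpen_compl_iff, ← isUpperSet_compl]
  refine and_congr_right fun _ => ⟨fun h D hDA hne hdir a ha => ?_,
    fun h D hne hdir a ha haA => ?_⟩
  · by_contra haA
    obtain ⟨d, hdD, hdA⟩ := h D hne hdir a ha haA
    exact hdA (hDA hdD)
  · exact inter_compl_nonempty_iff.2 fun hDA => haA (h D hDA hne hdir a ha)

theorem closure_singleton_scottTop (x : Q) : closure {x} = Iic x := by
  have hclosed : IsClosed (Iic x) :=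
    isClosed_scottTop_iff.2 ⟨isLowerSet_Iic x, fun _ hD _ _ _ ha => ha.2 hD⟩
  refine (closure_minimal (singleton_subset_iff.2 self_mem_Iic) hclosed).antisymm fun y hy => ?_
  exact (isClosed_scottTop_iff.1 isClosed_closure).1 hy (subset_closure rfl)

theorem specLE_scottTop_iff : specLE x y ↔ x ≤ y := by
  rw [specLE, closure_singleton_scottTop, mem_Iic]

theorem t0Space_scottTop (Q : Type*) [PartialOrder Q] : T0Space Q where
  t0 x y hxy := Iic_injective <| by
    simpa only [closure_singleton_scottTop] using inseparable_iff_closure_eq.1 hxy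

theorem specLE_map_of_continuous_scottTop (hg : Continuous g) (hxy : x ≤ y) :
    specLE (g x) (g y) :=
  specLE_iff_specializes.2 ((specLE_iff_specializes.1 (specLE_scottTop_iff.2 hxy)).map hg)

theorem specLUB_image_of_continuous_scottTop (hg : Continuous g) (hne : D.Nonempty)
    (hdir : DirectedOn (· ≤ ·) D) {a : Q} (ha : IsLUB D a) : specLUB (g '' D) (g a) := by
  refine ⟨forall_mem_image.2 fun d hd => specLE_map_of_continuous_scottTop hg (ha.1 hd),
    fun b hb => specLE_iff_forall_isOpen.2 fun U hU haU => ?_⟩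
  have hopen : IsScottOpen (g ⁻¹' U) := hU.preimage hg
  obtain ⟨d, hdD, hdU⟩ := hopen.2 D hne hdir a ha haU
  exact specLE_iff_forall_isOpen.1 (hb _ (mem_image_of_mem g hdD)) U hU hdU

theorem DSpace.continuous_of_specLUB_image (hY : DSpace Y)
    (hg : ∀ D : Set Q, D.Nonempty → DirectedOn (· ≤ ·) D →
      ∀ a, IsLUB D a → specLUB (g '' D) (g a)) : Continuous g := by
  have hmono ⦃x y : Q⦄ (hxy : x ≤ y) : specLE (g x) (g y) := by
    have hdir : DirectedOn (· ≤ ·) {x, y} := directedOn_pair hxy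
    have hlub : IsLUB {x, y} y := ⟨by simp [hxy], fun _ hb => hb (by simp)⟩
    exact (hg _ ⟨x, by simp⟩ hdir y hlub).1 _ (mem_image_of_mem g (by simp))
  refine continuous_def.2 fun U hU => ?_
  obtain ⟨hup, hsup⟩ := hY.2.2 U hU
  refine ⟨fun x y hxy => hup _ _ (hmono hxy), fun D hne hdir a ha haU => ?_⟩
  exact image_inter_nonempty_iff.1
    (hsup _ (hne.image g) (hdir.mono_comp hmono) _ (hg D hne hdir a ha) haU)

end Scott

section Ideals

theorem isIdealSet_Iic {P : Type*} [Preorder P] (x : P) : IsIdealSet (Iic x) :=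
  ⟨nonempty_Iic, fun _ ha _ hb => ⟨x, self_mem_Iic, ha, hb⟩, isLowerSet_Iic x⟩

/-- The poset `Id P` of ideals of `P`, ordered by inclusion. -/
abbrev IdealPoset (P : Type*) [Preorder P] : Type _ :=
  ↥{I : Set P | IsIdealSet I}

namespace IdealPoset

variable {P : Type*} [Preorder P] {I : IdealPoset P} {D : Set (IdealPoset P)} {x : P}

/-- The principal ideal `↓x`: this is the universal map `φ` from `P` to `Id P`. -/
def principal (x : P) : IdealPoset P :=
  ⟨Iic x, isIdealSet_Iic x⟩

theorem principal_le_iff : principal x ≤ I ↔ x ∈ (I : Set P) :=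
  ⟨fun h => h self_mem_Iic, fun hx _ hy => I.2.2.2 hy hx⟩

theorem principal_mono : Monotone (principal : P → IdealPoset P) := fun _ _ hxy =>
  principal_le_iff.2 hxy

theorem directedOn_image_principal (I : IdealPoset P) :
    DirectedOn (· ≤ ·) (principal '' (I : Set P)) :=
  I.2.2.1.mono_comp principal_mono

theorem isLUB_image_principal (I : IdealPoset P) : IsLUB (principal '' (I : Set P)) I :=
  ⟨forall_mem_image.2 fun _ => principal_le_iff.2,
    fun _ hJ _ hx => principal_le_iff.1 (hJ (mem_image_of_mem _ hx))⟩

theorem isIdealSet_biUnion (hne : D.Nonempty) (hdir : DirectedOn (· ≤ ·) D) :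
    IsIdealSet (⋃ J ∈ D, (J : Set P)) := by
  refine ⟨?_, ?_, isLowerSet_iUnion₂ fun J _ => J.2.2.2⟩
  · obtain ⟨J, hJ⟩ := hne
    exact J.2.1.mono (subset_biUnion_of_mem (u := fun J : IdealPoset P => (J : Set P)) hJ)
  · simp only [DirectedOn, mem_iUnion₂, exists_prop]
    rintro x ⟨J, hJ, hx⟩ y ⟨L, hL, hy⟩
    obtain ⟨M, hM, hJM, hLM⟩ := hdir J hJ L hL
    obtain ⟨z, hz, hxz, hyz⟩ := M.2.2.1 x (hJM hx) y (hLM hy)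
    exact ⟨z, ⟨M, hM, hz⟩, hxz, hyz⟩

theorem exists_mem_of_isLUB (hne : D.Nonempty) (hdir : DirectedOn (· ≤ ·) D) (hI : IsLUB D I)
    (hx : x ∈ (I : Set P)) : ∃ J ∈ D, x ∈ (J : Set P) := by
  have hle : I ≤ ⟨_, isIdealSet_biUnion hne hdir⟩ :=
    hI.2 fun J hJ => subset_biUnion_of_mem (u := fun J : IdealPoset P => (J : Set P)) hJ
  simpa only [mem_iUnion₂, exists_prop] using hle hx

/-- The space `Σ (Id P)`. -/
instance : TopologicalSpace (IdealPoset P) :=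
  scottTop (IdealPoset P)

theorem isOpen_setOf_mem (x : P) : IsOpen {I : IdealPoset P | x ∈ (I : Set P)} :=
  ⟨fun _ _ hIJ hx => hIJ hx, fun _ hne hdir _ hI hx => exists_mem_of_isLUB hne hdir hI hx⟩

theorem mem_iff_forall_principal_mem {A : Set (IdealPoset P)} (hA : IsClosed A) :
    I ∈ A ↔ ∀ x ∈ (I : Set P), principal x ∈ A := by
  obtain ⟨hlower, hsup⟩ := isClosed_scottTop_iff.1 hA
  exact ⟨fun hI x hx => hlower (principal_le_iff.2 hx) hI, fun h => hsup _ (image_subset_iff.2 h)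
    (I.2.1.image _) (directedOn_image_principal I) I (isLUB_image_principal I)⟩

theorem isIdealSet_setOf_principal_mem {A : Set (IdealPoset P)} (hirr : IsIrreducible A)
    (hA : IsClosed A) : IsIdealSet {x | principal x ∈ A} := by
  refine ⟨?_, fun x hx y hy => ?_, fun x y hyx hx =>
    (isClosed_scottTop_iff.1 hA).1 (principal_mono hyx) hx⟩
  · obtain ⟨I, hI⟩ := hirr.1
    exact I.2.1.mono ((mem_iff_forall_principal_mem hA).1 hI)
  · obtain ⟨I, hI, hxI, hyI⟩ := hirr.2 _ _ (isOpen_setOf_mem x) (isOpen_setOf_mem y)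
      ⟨_, hx, self_mem_Iic⟩ ⟨_, hy, self_mem_Iic⟩
    obtain ⟨z, hz, hxz, hyz⟩ := I.2.2.1 x hxI y hyI
    exact ⟨z, (mem_iff_forall_principal_mem hA).1 hI z hz, hxz, hyz⟩

theorem sober_scottTop (P : Type*) [Preorder P] : Sober (IdealPoset P) := by
  refine sober_iff.2 ⟨t0Space_scottTop _, ⟨fun {A} hirr hA =>
    ⟨⟨_, isIdealSet_setOf_principal_mem hirr hA⟩, ?_⟩⟩⟩
  rw [IsGenericPoint, closure_singleton_scottTop]
  ext I
  exact (mem_iff_forall_principal_mem hA).symm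

theorem continuous_principal :
    Continuous[alexTop P, scottTop (IdealPoset P)] (principal : P → IdealPoset P) :=
  continuous_alexTop_iff.2 fun _ _ hxy => specLE_scottTop_iff.2 (principal_mono hxy)

variable {Y : Type*} [tY : TopologicalSpace Y] {f : P → Y} {g : IdealPoset P → Y}

theorem specLUB_image_of_comp_principal_eq (hg : Continuous g) (hgf : g ∘ principal = f)
    (I : IdealPoset P) : specLUB (f '' I) (g I) := by
  rw [← hgf, image_comp]
  exact specLUB_image_of_continuous_scottTop hg (I.2.1.image _) (directedOn_image_principal I)
    (isLUB_image_principal I)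

theorem continuous_of_specLUB_image (hY : DSpace Y)
    (hg : ∀ I : IdealPoset P, specLUB (f '' I) (g I)) : Continuous g := by
  refine hY.continuous_of_specLUB_image fun D hne hdir I hI => ⟨?_, fun b hb => ?_⟩
  · exact forall_mem_image.2 fun J hJ => (hg J).2 _
      (forall_mem_image.2 fun x hx => (hg I).1 _ (mem_image_of_mem f (hI.1 hJ hx)))
  · refine (hg I).2 b (forall_mem_image.2 fun x hx => ?_)
    obtain ⟨J, hJ, hxJ⟩ := exists_mem_of_isLUB hne hdir hI hx
    exact specLE_trans ((hg J).1 _ (mem_image_of_mem f hxJ)) (hb _ (mem_image_of_mem g hJ))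

theorem existsUnique_continuous_comp_principal_eq (hY : DSpace Y)
    (hf : Continuous[alexTop P, tY] f) :
    ∃! g : IdealPoset P → Y, Continuous g ∧ g ∘ principal = f := by
  have := hY.1
  choose g hg using fun I : IdealPoset P =>
    hY.2.1 (f '' I) (I.2.1.image f) (I.2.2.1.mono_comp (continuous_alexTop_iff.1 hf))
  refine ⟨g, ⟨continuous_of_specLUB_image hY hg, ?_⟩, fun k hk => ?_⟩
  · exact funext fun x => (hg (principal x)).unique (specLUB_image_Iic hf x)
  · exact funext fun I => (specLUB_image_of_comp_principal_eq hk.1 hk.2 I).unique (hg I)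

end IdealPoset

end Ideals

theorem stmt19_general (P : Type u) [Preorder P] :
    Continuous[alexTop P, scottTop (IdealPoset P)] (IdealPoset.principal : P → IdealPoset P) ∧
    @Sober (IdealPoset P) (scottTop (IdealPoset P)) ∧
    (∀ (Y : Type v) (tY : TopologicalSpace Y), DSpace Y →
      ∀ f : P → Y, Continuous[alexTop P, tY] f →
        ∃! g : IdealPoset P → Y,
          Continuous[scottTop (IdealPoset P), tY] g ∧ g ∘ IdealPoset.principal = f) ∧
    IsKReflection dClass P (alexTop P) (IdealPoset P) (scottTop (IdealPoset P))
      IdealPoset.principal ∧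
    IsKReflection wfClass P (alexTop P) (IdealPoset P) (scottTop (IdealPoset P))
      IdealPoset.principal ∧
    IsKReflection soberClass P (alexTop P) (IdealPoset P) (scottTop (IdealPoset P))
      IdealPoset.principal := by
  have hsober : Sober (IdealPoset P) := IdealPoset.sober_scottTop P
  have hd : IsKReflection dClass P (alexTop P) (IdealPoset P) _ IdealPoset.principal :=
    ⟨hsober.wellFiltered.dSpace, IdealPoset.continuous_principal, fun _ _ hY _ hf =>
      IdealPoset.existsUnique_continuous_comp_principal_eq hY hf⟩
  exact ⟨IdealPoset.continuous_principal, hsober,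
    fun _ _ hY _ hf => IdealPoset.existsUnique_continuous_comp_principal_eq hY hf, hd,
    hd.of_subclass (fun _ _ => WellFiltered.dSpace) hsober.wellFiltered,
    hd.of_subclass (fun _ _ hY => hY.wellFiltered.dSpace) hsober⟩

/-- For any poset `P`, the map `φ : Γ P → Σ (Id P)`, `φ x = ↓x`, is
continuous, `Σ (Id P)` is sober, and every continuous map from `Γ P` to a d-space factors
uniquely continuously through `φ`; `⟨Σ (Id P), φ⟩` is simultaneously the d-reflection,
the well-filtered reflection, and the sobrification of `Γ P`. -/
theorem stmt19 (P : Type u) [PartialOrder P] :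
    (∀ x : P, {p : P | p ≤ x} ∈ {I : Set P | IsIdealSet I}) ∧
    ∀ φ : P → ↥{I : Set P | IsIdealSet I},
      (∀ x : P, (φ x : Set P) = {p : P | p ≤ x}) →
      @Continuous P ↥{I : Set P | IsIdealSet I} (alexTop P)
        (scottTop ↥{I : Set P | IsIdealSet I}) φ ∧
      @Sober ↥{I : Set P | IsIdealSet I} (scottTop ↥{I : Set P | IsIdealSet I}) ∧
      (∀ (Y : Type u) (tY : TopologicalSpace Y), @DSpace Y tY →
        ∀ f : P → Y, @Continuous P Y (alexTop P) tY f →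
          ∃! g : ↥{I : Set P | IsIdealSet I} → Y,
            @Continuous ↥{I : Set P | IsIdealSet I} Y
              (scottTop ↥{I : Set P | IsIdealSet I}) tY g ∧ g ∘ φ = f) ∧
      IsKReflection dClass P (alexTop P) ↥{I : Set P | IsIdealSet I}
        (scottTop ↥{I : Set P | IsIdealSet I}) φ ∧
      IsKReflection wfClass P (alexTop P) ↥{I : Set P | IsIdealSet I}
        (scottTop ↥{I : Set P | IsIdealSet I}) φ ∧
      IsKReflection soberClass P (alexTop P) ↥{I : Set P | IsIdealSet I}
        (scottTop ↥{I : Set P | IsIdealSet I}) φ := by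
  refine ⟨isIdealSet_Iic, fun φ hφ => ?_⟩
  obtain rfl : φ = IdealPoset.principal := funext fun x => Subtype.ext (hφ x)
  exact stmt19_general P
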